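/- arXiv:2206.02132 — 3 statements merged into one kernel-verified Lean document; each statement's English description precedes it below -/
import Mathlib

section
/- Let E be a G-invariant, bounded, Lebesgue-measurable subset of ℝ^d. Then for any ε > 0 there exists a G-invariant compact set E_ε ⊆ E with |E \ E_ε|_κ < ε such that for every θ ∈ (0,1) there exists δ > 0 with |B(x,r) ∩ E|_κ > θ |B(x,r)|_κ for every x ∈ E_ε and every 0 < r < δ. -/
/-!
The measure `W_κ dx` has a continuous density which vanishes only on finitely many hyperplanes,
so by the Besicovitch density theorem almost every point of `E` is a density point of `E`
(`ae_mem_densitySet`). Since spheres are null, the mass of `B(x,r)` and of `B(x,r) ∩ E` is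
continuous in `x`; hence the set of points at which the density of `E` is at least `θ` at all
scales below `s` is closed (`isClosed_densitySet`). Intersecting suitable such sets for a sequence
`θ → 1` with a compact subset of `E` gives a compact `F ⊆ E`, of almost full Lebesgue measure, on
which the density is uniform (`exists_compact_uniform_density`).

The group `G` is finite and consists of linear isometries (`dunklGroup_finite`,
`dunklGroup_isometry`), so `⋂ σ ∈ G, σ⁻¹ F` is a `G`-invariant compact subset of `F`, and it misses
at most `|G|` times the Lebesgue measure missed by `F`. Absolute continuity of `W_κ dx` on the
bounded set `E` converts smallness in Lebesgue measure into smallness of `|E \ E_ε|_κ`.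
-/

open MeasureTheory Filter Metric
open scoped RealInnerProductSpace Topology

noncomputable section

/-- Euclidean space `ℝ^d`. -/
abbrev Ed (d : ℕ) : Type := EuclideanSpace ℝ (Fin d)

/-- The reflection `σ_α(x) = x - ⟨α,x⟩α` (for roots normalized by `⟨α,α⟩ = 2`). -/
def reflAt {d : ℕ} (α x : Ed d) : Ed d := x - ⟪α, x⟫ • α

/-- The reflection group `G` generated by the reflections `σ_α`, `α ∈ R`, realized as the
submonoid of self-maps of `ℝ^d` generated by the reflections (each reflection is an
involution, so this is in fact a group of transformations). -/
def dunklGroup {d : ℕ} (R : Finset (Ed d)) : Submonoid (Function.End (Ed d)) :=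
  Submonoid.closure {f : Function.End (Ed d) | ∃ α ∈ R, f = reflAt α}

/-- A (normalized) root system `R` with positive subsystem `Rp` and
`G`-invariant nonnegative multiplicity function `κ`. -/
structure IsRootSystem {d : ℕ} (R Rp : Finset (Ed d)) (κ : Ed d → ℝ) : Prop where
  nonzero : ∀ α ∈ R, α ≠ (0 : Ed d)
  norm_two : ∀ α ∈ R, ⟪α, α⟫ = (2 : ℝ)
  refl_mem : ∀ α ∈ R, ∀ β ∈ R, reflAt α β ∈ R
  pos_sub : Rp ⊆ R
  pos_split : ∀ α ∈ R, (α ∈ Rp ∧ ¬(-α ∈ Rp)) ∨ (¬(α ∈ Rp) ∧ -α ∈ Rp)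
  kappa_nonneg : ∀ α ∈ R, 0 ≤ κ α
  kappa_inv : ∀ σ ∈ dunklGroup R, ∀ α ∈ R, κ (σ α) = κ α

/-- `x ∈ ℝ^d` is regular if `⟨α,x⟩ ≠ 0` for all roots `α ∈ R`. -/
def isRegular {d : ℕ} (R : Finset (Ed d)) (x : Ed d) : Prop :=
  ∀ α ∈ R, ⟪α, x⟫ ≠ (0 : ℝ)

/-- Second directional derivative of `u` at `p` in direction `v`. -/
def pd2 {d : ℕ} (u : Ed d × ℝ → ℝ) (p v : Ed d × ℝ) : ℝ :=
  fderiv ℝ (fun q => fderiv ℝ u q v) p v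

/-- The Euclidean Laplacian on `ℝ^{d+1} = ℝ^d × ℝ`. -/
def lapE {d : ℕ} (u : Ed d × ℝ → ℝ) (p : Ed d × ℝ) : ℝ :=
  (∑ i : Fin d, pd2 u p (EuclideanSpace.single i 1, 0)) + pd2 u p (0, 1)

/-- The Dunkl Laplacian `Δ_κ` on `ℝ^{d+1}` (the Dunkl operators act in the `x`-variables). -/
def dunklLap {d : ℕ} (Rp : Finset (Ed d)) (κ : Ed d → ℝ) (u : Ed d × ℝ → ℝ)
    (p : Ed d × ℝ) : ℝ :=
  lapE u p + 2 * ∑ α ∈ Rp, κ α *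
    (fderiv ℝ u p (α, 0) / ⟪α, p.1⟫ - (u p - u (reflAt α p.1, p.2)) / ⟪α, p.1⟫ ^ 2)

/-- The open upper half-space `ℝ^{d+1}₊`. -/
def upperHS (d : ℕ) : Set (Ed d × ℝ) := {p | 0 < p.2}

/-- `u` is `κ`-harmonic on `Ω`: `u` is `C²` on `Ω` and `Δ_κ u = 0` at every point of `Ω`
whose `x`-coordinate is regular. -/
def KHarmonicOn {d : ℕ} (R Rp : Finset (Ed d)) (κ : Ed d → ℝ) (u : Ed d × ℝ → ℝ)
    (Ω : Set (Ed d × ℝ)) : Prop :=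
  ContDiffOn ℝ 2 u Ω ∧ ∀ p ∈ Ω, isRegular R p.1 → dunklLap Rp κ u p = 0

/-- The cone `Γ_a(x)` of aperture `a` with vertex `(x,0)`. -/
def cone {d : ℕ} (a : ℝ) (x : Ed d) : Set (Ed d × ℝ) :=
  {p | 0 < p.2 ∧ dist p.1 x < a * p.2}

/-- The truncated cone `Γ_a^h(x)`. -/
def coneT {d : ℕ} (a h : ℝ) (x : Ed d) : Set (Ed d × ℝ) :=
  {p | 0 < p.2 ∧ p.2 < h ∧ dist p.1 x < a * p.2}

/-- `u` has a finite non-tangential limit at `(x,0)`. -/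
def HasNTLimit {d : ℕ} (u : Ed d × ℝ → ℝ) (x : Ed d) : Prop :=
  ∀ a > (0 : ℝ), ∃ L : ℝ, Tendsto u (𝓝[cone a x] (x, (0 : ℝ))) (𝓝 L)

/-- `u` is non-tangentially bounded at `(x,0)`. -/
def NTBounded {d : ℕ} (u : Ed d × ℝ → ℝ) (x : Ed d) : Prop :=
  ∃ a > (0 : ℝ), ∃ h > (0 : ℝ), ∃ M : ℝ, ∀ p ∈ coneT a h x, |u p| ≤ M

/-- A subset of `ℝ^d` is `G`-invariant. -/
def GInvSet {d : ℕ} (R : Finset (Ed d)) (E : Set (Ed d)) : Prop :=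
  ∀ σ ∈ dunklGroup R, σ '' E = E

/-- The Dunkl weight `W_κ(x) = ∏_{α ∈ R₊} |⟨α,x⟩|^{2κ(α)}`. -/
def Wk {d : ℕ} (Rp : Finset (Ed d)) (κ : Ed d → ℝ) (x : Ed d) : ℝ :=
  ∏ α ∈ Rp, |⟪α, x⟫| ^ (2 * κ α)

/-- The weighted measure `|A|_κ = ∫_A W_κ(x) dx`. -/
def wMeas {d : ℕ} (Rp : Finset (Ed d)) (κ : Ed d → ℝ) (A : Set (Ed d)) : ℝ :=
  ∫ x in A, Wk Rp κ x

/-! ### The reflection group -/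

/-- Every `σ ∈ G` is a linear isometry that maps `R` into `R` and displaces points only by
vectors of the span of `R`. -/
lemma dunklGroup_isometry {d : ℕ} {R Rp : Finset (Ed d)} {κ : Ed d → ℝ}
    (hRS : IsRootSystem R Rp κ) {σ : Function.End (Ed d)} (hσ : σ ∈ dunklGroup R) :
    ∃ L : Ed d ≃ₗᵢ[ℝ] Ed d, (∀ x, L x = σ x) ∧ (∀ α ∈ R, σ α ∈ R) ∧
      ∀ x, σ x - x ∈ Submodule.span ℝ (R : Set (Ed d)) := by
  refine Submonoid.closure_induction
    (motive := fun (f : Function.End (Ed d)) _ => ∃ L : Ed d ≃ₗᵢ[ℝ] Ed d, (∀ x, L x = f x) ∧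
      (∀ α ∈ R, f α ∈ R) ∧ ∀ x, f x - x ∈ Submodule.span ℝ (R : Set (Ed d))) ?_ ?_ ?_ hσ
  · rintro f ⟨α, hα, rfl⟩
    let T : Ed d →ₗ[ℝ] Ed d :=
      { toFun := reflAt α
        map_add' := fun x y => by
          simp only [reflAt, inner_add_right]; module
        map_smul' := fun c x => by
          simp only [reflAt, inner_smul_right, RingHom.id_apply]; module }
    have hT : ∀ x, ‖T x‖ = ‖x‖ := by
      intro x
      have h2 : ‖reflAt α x‖ ^ 2 = ‖x‖ ^ 2 := by
        rw [← real_inner_self_eq_norm_sq, ← real_inner_self_eq_norm_sq]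
        simp only [reflAt, inner_sub_left, inner_sub_right, real_inner_smul_left,
          inner_smul_right, hRS.norm_two α hα, real_inner_comm α x]
        ring
      exact (sq_eq_sq₀ (norm_nonneg _) (norm_nonneg _)).1 h2
    refine ⟨LinearIsometry.toLinearIsometryEquiv ⟨T, hT⟩ rfl, fun x => rfl,
      fun β hβ => hRS.refl_mem α hα β hβ, fun x => ?_⟩
    have : reflAt α x - x = (-⟪α, x⟫) • α := by simp only [reflAt]; module
    rw [this]
    exact Submodule.smul_mem _ _ (Submodule.subset_span hα)
  · exact ⟨LinearIsometryEquiv.refl ℝ _, fun x => rfl, fun α hα => hα, fun x => by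
      change x - x ∈ _
      simp⟩
  · rintro f g - - ⟨L, hL, hLR, hLs⟩ ⟨M, hM, hMR, hMs⟩
    refine ⟨M.trans L, fun x => ?_, fun α hα => hLR _ (hMR _ hα), fun x => ?_⟩
    · change L (M x) = f (g x)
      rw [hM, hL]
    · change f (g x) - x ∈ _
      have := Submodule.add_mem _ (hLs (g x)) (hMs x)
      simpa using this

lemma dunklGroup_inv {d : ℕ} {R Rp : Finset (Ed d)} {κ : Ed d → ℝ}
    (hRS : IsRootSystem R Rp κ) {σ : Function.End (Ed d)} (hσ : σ ∈ dunklGroup R) :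
    ∃ τ ∈ dunklGroup R, ∀ x, σ (τ x) = x := by
  refine Submonoid.closure_induction
    (motive := fun (f : Function.End (Ed d)) _ => ∃ τ ∈ dunklGroup R, ∀ x, f (τ x) = x) ?_ ?_ ?_ hσ
  · rintro f ⟨α, hα, rfl⟩
    refine ⟨reflAt α, Submonoid.subset_closure ⟨α, hα, rfl⟩, fun x => ?_⟩
    simp only [reflAt, inner_sub_right, inner_smul_right, hRS.norm_two α hα]
    module
  · exact ⟨1, Submonoid.one_mem _, fun x => rfl⟩
  · rintro f g - - ⟨f', hf', hf⟩ ⟨g', hg', hg⟩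
    refine ⟨g' * f', Submonoid.mul_mem _ hg' hf', fun x => ?_⟩
    change f (g (g' (f' x))) = x
    rw [hg, hf]

/-- `G` is finite because `σ ∈ G` is determined by the map it induces on `R`: if `σ` and `τ`
agree on `R`, then `σ x - τ x` lies in the span of `R` and is orthogonal to `σ(R) = R`. -/
lemma dunklGroup_finite {d : ℕ} {R Rp : Finset (Ed d)} {κ : Ed d → ℝ}
    (hRS : IsRootSystem R Rp κ) : Finite (dunklGroup R) := by
  choose L hL hLR hLs using fun σ : dunklGroup R => dunklGroup_isometry hRS σ.2
  refine Finite.of_injective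
    (fun (σ : dunklGroup R) (α : R) => (⟨σ.1 α.1, hLR σ α.1 α.2⟩ : R)) ?_
  intro σ τ h
  have hag : ∀ α ∈ R, σ.1 α = τ.1 α := fun α hα =>
    congrArg Subtype.val (congrFun h ⟨α, hα⟩)
  have hinj : Function.Injective (fun α : R => (⟨σ.1 α.1, hLR σ α.1 α.2⟩ : R)) := by
    intro α β hab
    have h1 : σ.1 α.1 = σ.1 β.1 := congrArg Subtype.val hab
    rw [← hL, ← hL] at h1
    exact Subtype.ext ((L σ).injective h1)
  have hsurj := Finite.injective_iff_surjective.1 hinj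
  apply Subtype.ext
  funext x
  have hmem : σ.1 x - τ.1 x ∈ Submodule.span ℝ (R : Set (Ed d)) := by
    have := Submodule.sub_mem _ (hLs σ x) (hLs τ x)
    simpa using this
  have horth : ∀ v ∈ Submodule.span ℝ (R : Set (Ed d)), ⟪v, σ.1 x - τ.1 x⟫ = 0 := by
    intro v hv
    induction hv using Submodule.span_induction with
    | mem v hv =>
      obtain ⟨β, hβ⟩ := hsurj ⟨v, hv⟩
      have hβ' : σ.1 β.1 = v := congrArg Subtype.val hβ
      have e1 : ⟪v, σ.1 x⟫ = ⟪β.1, x⟫ := by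
        rw [← hβ', ← hL, ← hL, LinearIsometryEquiv.inner_map_map]
      have e2 : ⟪v, τ.1 x⟫ = ⟪β.1, x⟫ := by
        rw [← hβ', hag _ β.2, ← hL, ← hL, LinearIsometryEquiv.inner_map_map]
      rw [inner_sub_right, e1, e2, sub_self]
    | zero => simp
    | add u w _ _ hu hw => rw [inner_add_left, hu, hw, add_zero]
    | smul c u _ hu => rw [real_inner_smul_left, hu, mul_zero]
  exact sub_eq_zero.1 (inner_self_eq_zero.1 (horth _ hmem))

/-! ### The weight -/

lemma Wk_nonneg {d : ℕ} (Rp : Finset (Ed d)) (κ : Ed d → ℝ) (x : Ed d) : 0 ≤ Wk Rp κ x :=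
  Finset.prod_nonneg fun _ _ => Real.rpow_nonneg (abs_nonneg _) _

lemma Wk_continuous {d : ℕ} {R Rp : Finset (Ed d)} {κ : Ed d → ℝ}
    (hRS : IsRootSystem R Rp κ) : Continuous (Wk Rp κ) := by
  unfold Wk
  refine continuous_finsetProd _ fun α hα => ?_
  refine Continuous.rpow_const (by fun_prop) fun x => Or.inr ?_
  have := hRS.kappa_nonneg α (hRS.pos_sub hα)
  positivity

/-- The zeros of the weight lie on finitely many hyperplanes. -/
lemma Wk_ae_pos {d : ℕ} {R Rp : Finset (Ed d)} {κ : Ed d → ℝ}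
    (hRS : IsRootSystem R Rp κ) : ∀ᵐ x : Ed d, 0 < Wk Rp κ x := by
  have h : ∀ᵐ x : Ed d, ∀ α ∈ Rp, ⟪α, x⟫ ≠ (0 : ℝ) := by
    refine (ae_ball_iff Rp.countable_toSet).2 fun α hα => ?_
    have h0 := Measure.addHaar_submodule (volume : Measure (Ed d))
      (LinearMap.ker (innerSL ℝ α).toLinearMap) (by
        intro htop
        have : α ∈ LinearMap.ker (innerSL ℝ α).toLinearMap := htop ▸ Submodule.mem_top
        have h2 : ⟪α, α⟫ = (0 : ℝ) := by simpa using this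
        rw [hRS.norm_two α (hRS.pos_sub hα)] at h2
        norm_num at h2)
    rw [ae_iff]
    convert h0 using 2
    ext x
    simp
  filter_upwards [h] with x hx
  exact Finset.prod_pos fun α hα => Real.rpow_pos_of_pos (abs_pos.2 (hx α hα)) _

/-! ### Density points for a continuous weight -/

section Density

variable {d : ℕ} {W : Ed d → ℝ}

lemma integrableOn_of_bounded (hW : Continuous W) {A : Set (Ed d)}
    (hA : Bornology.IsBounded A) : IntegrableOn W A :=
  (hW.continuousOn.integrableOn_compact hA.isCompact_closure).mono_set subset_closure

/-- Continuity of the mass of a ball in its centre: spheres are null, so the indicators of the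
balls converge almost everywhere. -/
lemma continuous_setIntegral_ball (hd : 1 ≤ d) (hW : Continuous W) {E : Set (Ed d)}
    (hE : MeasurableSet E) (r : ℝ) :
    Continuous fun x => ∫ y in ball x r ∩ E, W y := by
  have : Nontrivial (Ed d) := by
    have : Nonempty (Fin d) := ⟨⟨0, hd⟩⟩
    infer_instance
  rw [continuous_iff_continuousAt]
  intro x₀
  have e : (fun x => ∫ y in ball x r ∩ E, W y) =
      fun x => ∫ y, (ball x r ∩ E).indicator W y := by
    funext x
    rw [integral_indicator (measurableSet_ball.inter hE)]
  rw [e]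
  change Tendsto (fun x => ∫ y, (ball x r ∩ E).indicator W y) (𝓝 x₀)
    (𝓝 (∫ y, (ball x₀ r ∩ E).indicator W y))
  refine tendsto_integral_filter_of_dominated_convergence
    ((ball x₀ (r + 1)).indicator fun y => ‖W y‖) ?_ ?_ ?_ ?_
  · exact Eventually.of_forall fun x =>
      (hW.measurable.indicator (measurableSet_ball.inter hE)).aestronglyMeasurable
  · filter_upwards [ball_mem_nhds x₀ one_pos] with x hx
    refine Eventually.of_forall fun y => ?_
    rw [norm_indicator_eq_indicator_norm]
    refine Set.indicator_le_indicator_of_subset (fun z hz => ?_) (fun _ => norm_nonneg _) y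
    have h1 := mem_ball.1 hz.1
    have h2 := mem_ball.1 hx
    rw [mem_ball]
    linarith [dist_triangle z x x₀]
  · rw [integrable_indicator_iff measurableSet_ball]
    exact (integrableOn_of_bounded hW isBounded_ball).norm
  · have hs : ∀ᵐ y : Ed d, y ∉ sphere x₀ r :=
      measure_eq_zero_iff_ae_notMem.1 (Measure.addHaar_sphere _ x₀ r)
    filter_upwards [hs] with y hy
    refine tendsto_const_nhds.congr' ?_
    have hd' : Continuous fun x : Ed d => dist y x := by fun_prop
    rcases lt_or_gt_of_ne (show dist y x₀ ≠ r from hy) with h | h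
    · filter_upwards [hd'.continuousAt.eventually (gt_mem_nhds h)] with x hx
      by_cases hyE : y ∈ E <;> simp [Set.indicator, hyE, h, hx]
    · filter_upwards [hd'.continuousAt.eventually (lt_mem_nhds h)] with x hx
      simp [Set.indicator, not_lt.2 h.le, not_lt.2 hx.le]

/-- The points at which `E` has `W`-density at least `θ` at all scales below `s`. -/
def densitySet (W : Ed d → ℝ) (E : Set (Ed d)) (θ s : ℝ) : Set (Ed d) :=
  {x | ∀ r, 0 < r → r < s → θ * ∫ y in ball x r, W y ≤ ∫ y in ball x r ∩ E, W y}

lemma isClosed_densitySet (hd : 1 ≤ d) (hW : Continuous W) {E : Set (Ed d)}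
    (hE : MeasurableSet E) (θ s : ℝ) : IsClosed (densitySet W E θ s) := by
  have h1 : ∀ r, Continuous fun x => ∫ y in ball x r, W y := fun r => by
    simpa using continuous_setIntegral_ball hd hW MeasurableSet.univ r
  simp only [densitySet, Set.ofPred_forall]
  exact isClosed_iInter fun r => isClosed_iInter fun _ => isClosed_iInter fun _ =>
    isClosed_le (continuous_const.mul (h1 r)) (continuous_setIntegral_ball hd hW hE r)

lemma setIntegral_ball_pos (hW : Continuous W) (hW0 : ∀ x, 0 ≤ W x)
    (hWpos : ∀ᵐ x : Ed d, 0 < W x) (x : Ed d) {r : ℝ} (hr : 0 < r) :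
    0 < ∫ y in ball x r, W y := by
  rw [setIntegral_pos_iff_support_of_nonneg_ae (Eventually.of_forall hW0)
    (integrableOn_of_bounded hW isBounded_ball)]
  have h : (Function.support W ∩ ball x r : Set (Ed d)) =ᵐ[volume] ball x r := by
    filter_upwards [hWpos] with y hy
    exact propext ⟨fun h => h.2, fun h => ⟨hy.ne', h⟩⟩
  rw [measure_congr h]
  exact measure_ball_pos _ _ hr

/-- Lebesgue's density theorem for `W dx`, through the Besicovitch covering theorem: almost
every point of `E` lies in `densitySet W E θ s` for small `s`. The null sets are those of
Lebesgue measure, since `W > 0` almost everywhere. -/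
lemma ae_mem_densitySet (hd : 1 ≤ d) (hW : Continuous W) (hW0 : ∀ x, 0 ≤ W x)
    (hWpos : ∀ᵐ x : Ed d, 0 < W x) {E : Set (Ed d)} (hE : MeasurableSet E) {θ : ℝ}
    (hθ0 : 0 ≤ θ) (hθ : θ < 1) :
    ∀ᵐ x : Ed d, x ∈ E → ∃ n : ℕ, x ∈ densitySet W E θ (1 / ((n : ℝ) + 1)) := by
  have : Nontrivial (Ed d) := by
    have : Nonempty (Fin d) := ⟨⟨0, hd⟩⟩
    infer_instance
  set μ : Measure (Ed d) := volume.withDensity fun x => ENNReal.ofReal (W x) with hμ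
  have hWm : Measurable fun x => ENNReal.ofReal (W x) := hW.measurable.ennreal_ofReal
  have : IsLocallyFiniteMeasure μ := IsLocallyFiniteMeasure.withDensity_ofReal hW
  have hμA : ∀ A : Set (Ed d), MeasurableSet A → Bornology.IsBounded A →
      μ A = ENNReal.ofReal (∫ y in A, W y) := by
    intro A hA hb
    rw [hμ, withDensity_apply _ hA, ofReal_integral_eq_lintegral_ofReal
      (integrableOn_of_bounded hW hb) (Eventually.of_forall hW0)]
  have hball : ∀ (x : Ed d) (r : ℝ), (closedBall x r : Set (Ed d)) =ᵐ[μ] ball x r := by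
    intro x r
    have h : (closedBall x r : Set (Ed d)) =ᵐ[volume] ball x r := by
      filter_upwards [measure_eq_zero_iff_ae_notMem.1
        (Measure.addHaar_sphere (volume : Measure (Ed d)) x r)] with y hy
      exact propext ⟨fun h => lt_of_le_of_ne h hy, fun h => le_of_lt h⟩
    exact (withDensity_absolutelyContinuous _ _).ae_eq h
  have hB := Besicovitch.ae_tendsto_measure_inter_div_of_measurableSet μ hE
  rw [hμ, ae_withDensity_iff hWm, ← hμ] at hB
  filter_upwards [hB, hWpos] with x hx hxpos hxE
  have hlim := hx (by simpa using hxpos)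
  rw [Set.indicator_of_mem hxE, Pi.one_apply] at hlim
  have hev := hlim.eventually (lt_mem_nhds
    (show ENNReal.ofReal θ < 1 from by simpa using hθ))
  rw [eventually_nhdsWithin_iff, Metric.eventually_nhds_iff] at hev
  obtain ⟨s, hs, hev⟩ := hev
  obtain ⟨n, hn⟩ := exists_nat_one_div_lt hs
  refine ⟨n, fun r hr hrn => ?_⟩
  have h := hev (y := r) (by
    rw [Real.dist_eq, sub_zero, abs_of_pos hr]; exact hrn.trans hn) hr
  have e1 : μ (closedBall x r) = ENNReal.ofReal (∫ y in ball x r, W y) := by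
    rw [measure_congr (hball x r), hμA _ measurableSet_ball isBounded_ball]
  have e2 : μ (E ∩ closedBall x r) = ENNReal.ofReal (∫ y in ball x r ∩ E, W y) := by
    rw [measure_congr ((ae_eq_refl E).inter (hball x r)), Set.inter_comm,
      hμA _ (measurableSet_ball.inter hE) (isBounded_ball.subset Set.inter_subset_left)]
  have hpos := setIntegral_ball_pos hW hW0 hWpos x hr
  rw [e1, e2, ← ENNReal.ofReal_div_of_pos hpos, ENNReal.ofReal_lt_ofReal_iff_of_nonneg hθ0,
    lt_div_iff₀ hpos] at h
  exact h.le

/-- Egorov-type step: up to small Lebesgue measure, `E` is exhausted by a compact set on which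
the density of `E` tends to `1` uniformly. Closedness of `densitySet` gives compactness. -/
lemma exists_compact_uniform_density (hd : 1 ≤ d) (hW : Continuous W) (hW0 : ∀ x, 0 ≤ W x)
    (hWpos : ∀ᵐ x : Ed d, 0 < W x) {E : Set (Ed d)} (hE : MeasurableSet E)
    (hEb : Bornology.IsBounded E) {a : ENNReal} (ha : a ≠ 0) :
    ∃ F : Set (Ed d), IsCompact F ∧ F ⊆ E ∧ volume (E \ F) < a ∧
      ∀ θ < 1, ∃ δ > (0 : ℝ), F ⊆ densitySet W E θ δ := by
  have hEfin : volume E ≠ ⊤ := hEb.measure_lt_top.ne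
  have ha2 : a / 2 ≠ 0 := by simpa using ha
  obtain ⟨K, hKE, hK, hKa⟩ := hE.exists_isCompact_sdiff_lt hEfin ha2
  obtain ⟨η, hη0, hη⟩ := ENNReal.exists_pos_sum_of_countable ha2 ℕ
  let t : ℕ → ℝ := fun k => 1 - 1 / ((k : ℝ) + 1)
  let D : ℕ → ℕ → Set (Ed d) := fun k n => densitySet W E (t k) (1 / ((n : ℝ) + 1))
  have hstep : ∀ k, ∃ n, volume (E \ D k n) < η k := by
    intro k
    have ht : 0 ≤ t k ∧ t k < 1 := by
      have h1 : (0 : ℝ) < 1 / ((k : ℝ) + 1) := by positivity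
      have h2 : 1 / ((k : ℝ) + 1) ≤ 1 := by
        rw [div_le_one (by positivity)]
        linarith [(Nat.cast_nonneg k : (0 : ℝ) ≤ k)]
      exact ⟨sub_nonneg.2 h2, by simp only [t]; linarith⟩
    have hanti : Antitone fun n => E \ D k n := by
      intro m n hmn
      refine Set.sdiff_subset_sdiff_right fun x hx r hr hrn => hx r hr (hrn.trans_le ?_)
      exact Nat.one_div_le_one_div hmn
    have hlim := tendsto_measure_iInter_atTop (μ := (volume : Measure (Ed d)))
      (fun n : ℕ => (hE.diff (isClosed_densitySet hd hW hE (t k)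
        (1 / ((n : ℝ) + 1))).measurableSet).nullMeasurableSet) hanti
      ⟨0, ne_top_of_le_ne_top hEfin (measure_mono Set.sdiff_subset)⟩
    have hnull : volume (⋂ n, E \ D k n) = 0 := by
      have := ae_mem_densitySet hd hW hW0 hWpos hE ht.1 ht.2
      rw [ae_iff] at this
      refine measure_mono_null (fun x hx => ?_) this
      rw [Set.mem_iInter] at hx
      exact fun h => by
        obtain ⟨n, hn⟩ := h (hx 0).1
        exact (hx n).2 hn
    rw [hnull] at hlim
    exact (hlim.eventually (gt_mem_nhds (by simpa using hη0 k))).exists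
  choose n hn using hstep
  refine ⟨K ∩ ⋂ k, D k (n k), hK.inter_right (isClosed_iInter fun k =>
    isClosed_densitySet hd hW hE _ _), Set.inter_subset_left.trans hKE, ?_, ?_⟩
  · have hsub : E \ (K ∩ ⋂ k, D k (n k)) ⊆ (E \ K) ∪ ⋃ k, E \ D k (n k) := by
      rw [Set.sdiff_inter, Set.sdiff_iInter]
    calc volume (E \ (K ∩ ⋂ k, D k (n k)))
        ≤ volume (E \ K) + ∑' k, volume (E \ D k (n k)) :=
          (measure_mono hsub).trans ((measure_union_le _ _).trans
            (add_le_add_right (measure_iUnion_le _) _))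
      _ ≤ volume (E \ K) + ∑' k, (η k : ENNReal) :=
          add_le_add_right (ENNReal.tsum_le_tsum fun k => (hn k).le) _
      _ < a / 2 + a / 2 := ENNReal.add_lt_add hKa hη
      _ = a := ENNReal.add_halves a
  · intro θ hθ
    obtain ⟨k, hk⟩ := exists_nat_one_div_lt (sub_pos.2 hθ)
    refine ⟨1 / ((n k : ℝ) + 1), by positivity, fun x hx r hr hrn => ?_⟩
    have h := Set.mem_iInter.1 hx.2 k r hr hrn
    refine le_trans (mul_le_mul_of_nonneg_right ?_ ?_) h
    · simp only [t]; linarith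
    · exact (setIntegral_ball_pos hW hW0 hWpos x hr).le

end Density

/-! ### Symmetrization over the group -/

/-- **Lemma 6.1 (weighted density points).** For a `G`-invariant bounded measurable
`E ⊆ ℝ^d` and any `ε > 0` there is a `G`-invariant compact `E_ε ⊆ E` with
`|E \ E_ε|_κ < ε` such that for every `θ ∈ (0,1)` there is `δ > 0` with
`|B(x,r) ∩ E|_κ > θ|B(x,r)|_κ` for all `x ∈ E_ε` and `0 < r < δ`. -/
theorem dunkl_density_points
    {d : ℕ} (hd : 1 ≤ d) (R Rp : Finset (Ed d)) (κ : Ed d → ℝ)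
    (hRS : IsRootSystem R Rp κ)
    (E : Set (Ed d)) (hEm : MeasurableSet E) (hEb : Bornology.IsBounded E)
    (hEinv : GInvSet R E) :
    ∀ ε > (0 : ℝ), ∃ Eε : Set (Ed d),
      IsCompact Eε ∧ Eε ⊆ E ∧ GInvSet R Eε ∧
      wMeas Rp κ (E \ Eε) < ε ∧
      ∀ θ ∈ Set.Ioo (0 : ℝ) 1, ∃ δ > (0 : ℝ), ∀ x ∈ Eε, ∀ r : ℝ, 0 < r → r < δ →
        θ * wMeas Rp κ (ball x r) < wMeas Rp κ (ball x r ∩ E) := by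
  intro ε hε
  have hW := Wk_continuous hRS
  have hW0 := Wk_nonneg Rp κ
  have hWpos := Wk_ae_pos hRS
  have := dunklGroup_finite hRS
  have := Fintype.ofFinite (dunklGroup R)
  -- Absolute continuity of `W dx` on `E` turns `ε` into a tolerance `η` for Lebesgue measure.
  have hint : ∫⁻ x in E, ENNReal.ofReal (Wk Rp κ x) ≠ ⊤ := by
    rw [← ofReal_integral_eq_lintegral_ofReal (integrableOn_of_bounded hW hEb)
      (Eventually.of_forall hW0)]
    exact ENNReal.ofReal_ne_top
  obtain ⟨η, hη0, hη⟩ := exists_pos_setLIntegral_lt_of_measure_lt hint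
    (ENNReal.ofReal_pos.2 hε).ne'
  obtain ⟨F, hF, hFE, hFm, hFd⟩ := exists_compact_uniform_density hd hW hW0 hWpos hEm hEb
    (a := η / Fintype.card (dunklGroup R)) (ENNReal.div_pos hη0.ne' (by simp)).ne'
  have hcont : ∀ σ : dunklGroup R, Continuous σ.1 := fun σ => by
    obtain ⟨L, hL, -⟩ := dunklGroup_isometry hRS σ.2
    exact L.continuous.congr hL
  -- The largest `G`-invariant subset of `F`.
  let F' : Set (Ed d) := ⋂ σ : dunklGroup R, σ.1 ⁻¹' F
  have hF'F : F' ⊆ F := fun x hx => Set.mem_iInter.1 hx 1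
  have hF'c : IsCompact F' := hF.of_isClosed_subset
    (isClosed_iInter fun σ => hF.isClosed.preimage (hcont σ)) hF'F
  have hmaps : ∀ τ ∈ dunklGroup R, ∀ x ∈ F', τ x ∈ F' := by
    intro τ hτ x hx
    refine Set.mem_iInter.2 fun σ => ?_
    have h := Set.mem_iInter.1 hx (⟨σ.1 * τ, mul_mem σ.2 hτ⟩ : dunklGroup R)
    exact h
  have hvol : volume (E \ F') < η := by
    have hsub : E \ F' ⊆ ⋃ σ : dunklGroup R, σ.1 ⁻¹' (E \ F) := by
      intro x hx
      have h2 := hx.2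
      simp only [F', Set.mem_iInter, not_forall] at h2
      obtain ⟨σ, hσ⟩ := h2
      exact Set.mem_iUnion.2 ⟨σ, hEinv σ.1 σ.2 ▸ Set.mem_image_of_mem _ hx.1, hσ⟩
    have hpre : ∀ σ : dunklGroup R, volume (σ.1 ⁻¹' (E \ F)) = volume (E \ F) := fun σ => by
      obtain ⟨L, hL, -⟩ := dunklGroup_isometry hRS σ.2
      rw [← (funext hL : ⇑L = σ.1)]
      exact L.measurePreserving.measure_preimage (hEm.diff hF.measurableSet).nullMeasurableSet
    calc volume (E \ F') ≤ ∑ σ : dunklGroup R, volume (σ.1 ⁻¹' (E \ F)) :=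
          (measure_mono hsub).trans (measure_iUnion_fintype_le _ _)
      _ = volume (E \ F) * Fintype.card (dunklGroup R) := by
          simp [hpre, mul_comm]
      _ < η := ENNReal.mul_lt_of_lt_div hFm
  refine ⟨F', hF'c, hF'F.trans hFE, ?_, ?_, ?_⟩
  · intro τ hτ
    refine Set.Subset.antisymm (Set.image_subset_iff.2 (hmaps τ hτ)) fun x hx => ?_
    obtain ⟨τ', hτ', h⟩ := dunklGroup_inv hRS hτ
    exact ⟨τ' x, hmaps τ' hτ' x hx, h x⟩
  · have hm : MeasurableSet (E \ F') := hEm.diff hF'c.measurableSet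
    have h := hη (E \ F') (by
      rw [Measure.restrict_apply hm]
      exact (measure_mono Set.inter_subset_left).trans_lt hvol)
    rw [Measure.restrict_restrict hm, Set.inter_eq_left.2 Set.sdiff_subset,
      ← ofReal_integral_eq_lintegral_ofReal
        (integrableOn_of_bounded hW (hEb.subset Set.sdiff_subset)) (Eventually.of_forall hW0)] at h
    exact (ENNReal.ofReal_lt_ofReal_iff hε).1 h
  · intro θ hθ
    -- An intermediate level between `θ` and `1` yields the strict inequality.
    obtain ⟨θ', h1, h2⟩ := exists_between hθ.2
    obtain ⟨δ, hδ, hδF⟩ := hFd θ' h2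
    exact ⟨δ, hδ, fun x hx r hr hrδ => lt_of_lt_of_le
      (mul_lt_mul_of_pos_right h1 (setIntegral_ball_pos hW hW0 hWpos x hr))
      (hδF (hF'F hx) r hr hrδ)⟩

end
end

section
/- Let λ > 0. For every x, t ∈ ℝ and every continuous function f : ℝ → ℝ with f ≥ 0, one has (τ_x^{λ+1} f)(t) + (τ_{−x}^{λ+1} f)(t) ≥ 0; that is, the operator τ_x^{λ+1} + τ_{−x}^{λ+1} is positivity-preserving. -/
/-!
The substitution `θ ↦ -θ` in the integral for `τ_{-x}` turns `B` into the same function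
`B(θ) = √(x² + t² + 2xtθ)` as in the integral for `τ_x`, and replaces the factor `1 + θ` by `1 - θ`.
Since `(x+t)(1+θ) + (t-x)(1-θ) = 2(t + xθ)`, the sum of the two integrands is
`2 (f_e(B) + f_o(B) (t + xθ)/B) (1-θ²)^λ`.
As `B² - (t + xθ)² = x²(1-θ²) ≥ 0`, the quotient `(t + xθ)/B` lies in `[-1, 1]`, so the bracket is a
convex combination of `f(B)` and `f(-B)` and hence nonnegative (`tauIntegrand_add_neg_nonneg`).

The integrals may be added because both integrands are bounded: the apparent singularity of
`(x+t)/B` is absorbed by the factor `1 + θ`, thanks to `|(x+t)(1+θ)| ≤ 2B`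
(`abs_add_mul_le_two_Bq`, `tauIntegrand_intervalIntegrable`).
-/

open MeasureTheory intervalIntegral

noncomputable section

/-- Even part of `f`. -/
def evenPart (f : ℝ → ℝ) (s : ℝ) : ℝ := (f s + f (-s)) / 2

/-- Odd part of `f`. -/
def oddPart (f : ℝ → ℝ) (s : ℝ) : ℝ := (f s - f (-s)) / 2

/-- `B(θ) = √(x² + t² + 2xtθ)`. -/
def Bq (x t θ : ℝ) : ℝ := Real.sqrt (x ^ 2 + t ^ 2 + 2 * x * t * θ)

/-- Normalizing constant `c_μ = Γ(μ+1/2)/(Γ(μ)Γ(1/2))`. -/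
def cMu (μ : ℝ) : ℝ := Real.Gamma (μ + 1 / 2) / (Real.Gamma μ * Real.Gamma (1 / 2))

/-- The one-dimensional generalized (Dunkl) translation with parameter `μ`:
`(τ_x^μ f)(t) = c_μ ∫_{−1}^{1} [f_e(B(θ)) + f_o(B(θ))(x+t)/B(θ)] (1+θ)(1−θ²)^{μ−1} dθ`,
where the odd term is interpreted as `0` when `B(θ) = 0`. -/
def tau1 (μ : ℝ) (f : ℝ → ℝ) (x t : ℝ) : ℝ :=
  cMu μ * ∫ θ in (-1 : ℝ)..1,
    (evenPart f (Bq x t θ) +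
        (if Bq x t θ = 0 then 0 else oddPart f (Bq x t θ) * (x + t) / Bq x t θ)) *
      ((1 + θ) * (1 - θ ^ 2) ^ (μ - 1))

/-- The integrand in the definition of `tau1 μ f x t`. -/
def tauIntegrand (μ : ℝ) (f : ℝ → ℝ) (x t θ : ℝ) : ℝ :=
  (evenPart f (Bq x t θ) +
      (if Bq x t θ = 0 then 0 else oddPart f (Bq x t θ) * (x + t) / Bq x t θ)) *
    ((1 + θ) * (1 - θ ^ 2) ^ (μ - 1))

lemma Bq_sq_arg_nonneg (x t : ℝ) {θ : ℝ} (h1 : -1 ≤ θ) (h2 : θ ≤ 1) :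
    0 ≤ x ^ 2 + t ^ 2 + 2 * x * t * θ := by
  nlinarith [mul_nonneg (sq_nonneg (x + t)) (by linarith : 0 ≤ 1 + θ),
    mul_nonneg (sq_nonneg (x - t)) (by linarith : 0 ≤ 1 - θ)]

lemma Bq_sq (x t : ℝ) {θ : ℝ} (h1 : -1 ≤ θ) (h2 : θ ≤ 1) :
    Bq x t θ ^ 2 = x ^ 2 + t ^ 2 + 2 * x * t * θ :=
  Real.sq_sqrt (Bq_sq_arg_nonneg x t h1 h2)

lemma Bq_nonneg (x t θ : ℝ) : 0 ≤ Bq x t θ := Real.sqrt_nonneg _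

lemma Bq_neg_neg (x t θ : ℝ) : Bq (-x) t (-θ) = Bq x t θ := by
  unfold Bq; congr 1; ring

lemma Bq_le (x t : ℝ) {θ : ℝ} (h1 : -1 ≤ θ) (h2 : θ ≤ 1) : Bq x t θ ≤ |x| + |t| := by
  refine abs_le_of_sq_le_sq' ?_ (by positivity) |>.2
  rw [Bq_sq x t h1 h2, add_sq, sq_abs, sq_abs]
  have h : x * t * θ ≤ |x| * |t| := by
    calc x * t * θ ≤ |x * t * θ| := le_abs_self _
      _ = |x| * |t| * |θ| := by rw [abs_mul, abs_mul]
      _ ≤ |x| * |t| * 1 := by gcongr; exact abs_le.2 ⟨h1, h2⟩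
      _ = |x| * |t| := mul_one _
  linarith

lemma abs_add_mul_le_Bq (x t : ℝ) {θ : ℝ} (h1 : -1 ≤ θ) (h2 : θ ≤ 1) :
    |t + x * θ| ≤ Bq x t θ := by
  refine abs_le_of_sq_le_sq ?_ (Bq_nonneg _ _ _)
  rw [Bq_sq x t h1 h2]
  nlinarith [mul_nonneg (sq_nonneg x) (mul_nonneg (by linarith : 0 ≤ 1 + θ)
    (by linarith : 0 ≤ 1 - θ))]

lemma abs_add_mul_le_two_Bq (x t : ℝ) {θ : ℝ} (h1 : -1 ≤ θ) (h2 : θ ≤ 1) :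
    |(x + t) * (1 + θ)| ≤ 2 * Bq x t θ := by
  refine abs_le_of_sq_le_sq ?_ (by linarith [Bq_nonneg x t θ])
  rw [mul_pow 2, Bq_sq x t h1 h2]
  -- `2B² = (x+t)²(1+θ) + (x-t)²(1-θ)` and `(1+θ)² ≤ 2(1+θ)`.
  have ha : 0 ≤ (x + t) ^ 2 * ((1 + θ) * (1 - θ)) :=
    mul_nonneg (sq_nonneg _) (mul_nonneg (by linarith) (by linarith))
  have hb : 0 ≤ (x - t) ^ 2 * (1 - θ) := mul_nonneg (sq_nonneg _) (by linarith)
  nlinarith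

lemma tauIntegrand_measurable (μ : ℝ) {f : ℝ → ℝ} (hf : Continuous f) (x t : ℝ) :
    Measurable (tauIntegrand μ f x t) := by
  have hfm := hf.measurable
  have hB : Measurable (Bq x t) := by unfold Bq; fun_prop
  have he : Measurable fun θ => evenPart f (Bq x t θ) := by unfold evenPart; fun_prop
  have ho : Measurable fun θ => oddPart f (Bq x t θ) := by unfold oddPart; fun_prop
  refine Measurable.mul (he.add ?_) (by fun_prop)
  exact Measurable.ite (hB (measurableSet_singleton 0)) measurable_const (by fun_prop)

lemma tauIntegrand_intervalIntegrable {μ : ℝ} (hμ : 1 ≤ μ) {f : ℝ → ℝ} (hf : Continuous f)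
    (x t : ℝ) : IntervalIntegrable (tauIntegrand μ f x t) volume (-1) 1 := by
  obtain ⟨M, hM⟩ := (isCompact_Icc (a := -(|x| + |t|)) (b := |x| + |t|)).exists_bound_of_continuousOn
    hf.continuousOn
  refine (intervalIntegrable_const (c := 4 * M)).mono_fun'
    (tauIntegrand_measurable μ hf x t).aestronglyMeasurable ?_
  rw [Set.uIoc_of_le (by norm_num)]
  refine (ae_restrict_iff' measurableSet_Ioc).2 (Filter.Eventually.of_forall ?_)
  rintro θ ⟨h1, h2⟩
  have h1 := h1.le
  have hB0 := Bq_nonneg x t θ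
  have hBR := Bq_le x t h1 h2
  have hp := abs_le.1 (hM (Bq x t θ) ⟨by linarith, hBR⟩)
  have hn := abs_le.1 (hM (-Bq x t θ) ⟨by linarith, by linarith⟩)
  have he : |evenPart f (Bq x t θ)| ≤ M := by
    unfold evenPart; exact abs_le.2 ⟨by linarith, by linarith⟩
  have ho : |oddPart f (Bq x t θ)| ≤ M := by
    unfold oddPart; exact abs_le.2 ⟨by linarith, by linarith⟩
  have hM0 : 0 ≤ M := (abs_nonneg _).trans he
  have hw0 : 0 ≤ 1 - θ ^ 2 := by nlinarith
  have hw : |(1 - θ ^ 2) ^ (μ - 1)| ≤ 1 := by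
    rw [abs_of_nonneg (Real.rpow_nonneg hw0 _)]
    exact Real.rpow_le_one hw0 (by nlinarith) (by linarith)
  have h3 : |evenPart f (Bq x t θ) * (1 + θ)| ≤ M * 2 := by
    rw [abs_mul]
    gcongr
    exact abs_le.2 ⟨by linarith, by linarith⟩
  have h4 : |(if Bq x t θ = 0 then 0 else oddPart f (Bq x t θ) * (x + t) / Bq x t θ) * (1 + θ)|
      ≤ M * 2 := by
    split_ifs with h0
    · simpa using hM0
    · have hpos : 0 < Bq x t θ := lt_of_le_of_ne hB0 (Ne.symm h0)
      have : oddPart f (Bq x t θ) * (x + t) / Bq x t θ * (1 + θ)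
          = oddPart f (Bq x t θ) * ((x + t) * (1 + θ) / Bq x t θ) := by ring
      rw [this, abs_mul, abs_div, abs_of_pos hpos]
      gcongr
      rw [div_le_iff₀ hpos]
      exact abs_add_mul_le_two_Bq x t h1 h2
  unfold tauIntegrand
  beta_reduce
  rw [Real.norm_eq_abs, ← mul_assoc, abs_mul, add_mul]
  calc _ ≤ (M * 2 + M * 2) * 1 := by
        gcongr
        exact (abs_add_le _ _).trans (add_le_add h3 h4)
    _ = 4 * M := by ring

/-- After the reflection `θ ↦ -θ` in the second integrand, the sum of the two integrands is
pointwise nonnegative. -/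
lemma tauIntegrand_add_neg_nonneg (μ : ℝ) {f : ℝ → ℝ} (hf0 : ∀ s, 0 ≤ f s) (x t : ℝ) {θ : ℝ}
    (h1 : -1 ≤ θ) (h2 : θ ≤ 1) :
    0 ≤ tauIntegrand μ f x t θ + tauIntegrand μ f (-x) t (-θ) := by
  have hw : 0 ≤ (1 - θ ^ 2) ^ (μ - 1) := Real.rpow_nonneg (by nlinarith) _
  have hp := hf0 (Bq x t θ)
  have hn := hf0 (-Bq x t θ)
  unfold tauIntegrand
  rw [Bq_neg_neg, neg_sq]
  split_ifs with h0
  · have he : 0 ≤ evenPart f (Bq x t θ) := by unfold evenPart; linarith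
    have : (evenPart f (Bq x t θ) + 0) * ((1 + θ) * (1 - θ ^ 2) ^ (μ - 1)) +
        (evenPart f (Bq x t θ) + 0) * ((1 + -θ) * (1 - θ ^ 2) ^ (μ - 1))
        = 2 * evenPart f (Bq x t θ) * (1 - θ ^ 2) ^ (μ - 1) := by ring
    rw [this]
    positivity
  · have hpos : 0 < Bq x t θ := lt_of_le_of_ne (Bq_nonneg _ _ _) (Ne.symm h0)
    have hr := abs_le.1 (abs_add_mul_le_Bq x t h1 h2)
    have hr1 : (t + x * θ) / Bq x t θ ≤ 1 := (div_le_one hpos).2 hr.2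
    have hr2 : -1 ≤ (t + x * θ) / Bq x t θ := (le_div_iff₀ hpos).2 (by linarith)
    have : (evenPart f (Bq x t θ) + oddPart f (Bq x t θ) * (x + t) / Bq x t θ) *
          ((1 + θ) * (1 - θ ^ 2) ^ (μ - 1)) +
        (evenPart f (Bq x t θ) + oddPart f (Bq x t θ) * (-x + t) / Bq x t θ) *
          ((1 + -θ) * (1 - θ ^ 2) ^ (μ - 1))
        = (f (Bq x t θ) * (1 + (t + x * θ) / Bq x t θ) +
          f (-Bq x t θ) * (1 - (t + x * θ) / Bq x t θ)) * (1 - θ ^ 2) ^ (μ - 1) := by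
      unfold evenPart oddPart; ring
    rw [this]
    exact mul_nonneg (add_nonneg (mul_nonneg hp (by linarith)) (mul_nonneg hn (by linarith))) hw

/-- **Positivity of `τ_x^{λ+1} + τ_{−x}^{λ+1}`.** For `λ > 0` and continuous `f ≥ 0`,
`(τ_x^{λ+1} f)(t) + (τ_{−x}^{λ+1} f)(t) ≥ 0`. -/
theorem tau1_add_neg_nonneg
    (lam : ℝ) (hlam : 0 < lam) (f : ℝ → ℝ) (hf : Continuous f) (hf0 : ∀ s, 0 ≤ f s)
    (x t : ℝ) :
    0 ≤ tau1 (lam + 1) f x t + tau1 (lam + 1) f (-x) t := by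
  have hc : 0 ≤ cMu (lam + 1) := by
    unfold cMu
    exact div_nonneg (Real.Gamma_pos_of_pos (by linarith)).le
      (mul_pos (Real.Gamma_pos_of_pos (by linarith)) (Real.Gamma_pos_of_pos (by norm_num))).le
  have hI := tauIntegrand_intervalIntegrable (μ := lam + 1) (by linarith) hf x t
  have hJ : IntervalIntegrable (fun θ => tauIntegrand (lam + 1) f (-x) t (-θ)) volume (-1) 1 := by
    have := (tauIntegrand_intervalIntegrable (μ := lam + 1) (by linarith) hf (-x) t).comp_sub_left 0
    simpa using this.symm
  have hrefl : ∫ θ in (-1 : ℝ)..1, tauIntegrand (lam + 1) f (-x) t θ =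
      ∫ θ in (-1 : ℝ)..1, tauIntegrand (lam + 1) f (-x) t (-θ) := by
    rw [intervalIntegral.integral_comp_neg, neg_neg]
  change 0 ≤ cMu (lam + 1) * (∫ θ in (-1 : ℝ)..1, tauIntegrand (lam + 1) f x t θ) +
    cMu (lam + 1) * (∫ θ in (-1 : ℝ)..1, tauIntegrand (lam + 1) f (-x) t θ)
  rw [← mul_add, hrefl, ← intervalIntegral.integral_add hI hJ]
  exact mul_nonneg hc (intervalIntegral.integral_nonneg (by norm_num)
    fun θ hθ => tauIntegrand_add_neg_nonneg (lam + 1) hf0 x t hθ.1 hθ.2)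

end
end

section
/- Let u be a continuous function on ℝ^{d+1}₊ and E a Lebesgue-measurable subset of ℝ^d with 0 < |E| < ∞. If u is non-tangentially bounded at (x,0) for every x ∈ E, then for any ε > 0 there exists a compact set E_ε ⊆ E with |E \ E_ε| < ε such that for every a > 0 and h > 0 there is a constant c > 0 with |u(x,y)| ≤ c for all (x,y) ∈ ∪_{x⁰∈E_ε} Γ_a^h(x⁰). -/
/-!
The compact set is built from two uniformisations. The sets `coneBddSet u n` of points over which
`|u| ≤ n` on the cone of aperture and height `1 / (n + 1)` are closed, increase with `n`, and cover
`E`, so some compact `K ⊆ E` inside one of them carries most of `E`.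

By the Lebesgue density theorem, applied to balls centred at `t` of radius `|t - x| / (j + 1)`,
almost every `x ∈ K` satisfies `dist(t, K) ≤ |t - x| / (j + 1)` for all `t` near `x`
(`ae_exists_mem_nearSet`). For fixed `j` and fixed size `1 / (k + 1)` of the neighbourhood the
points `x` with this property form a closed set `nearSet K j k`, so removing a small part of `K` for
each `j` leaves a compact `Eε` on which the neighbourhood depends on `j` only.

Given `a` and `h`, take `j` with `a / (j + 1) < 1 / (n + 1)`. A point `(t, y)` of a cone of
aperture `a` over `Eε` with `y` small has `dist(t, K) < y / (n + 1)`, hence lies in a narrow cone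
over a point of `K`, where `|u| ≤ n`. The points with `y` bounded below lie in a compact subset of
the half-space, on which the continuous `u` is bounded. This treats all apertures simultaneously.
-/

open MeasureTheory Filter Metric
open scoped Topology

noncomputable section

/-- The points `x` such that `|u| ≤ n` on the cone at `x` of aperture and height `1 / (n + 1)`. -/
def coneBddSet {d : ℕ} (u : Ed d × ℝ → ℝ) (n : ℕ) : Set (Ed d) :=
  {x | ∀ p ∈ coneT (1 / ((n : ℝ) + 1)) (1 / ((n : ℝ) + 1)) x, |u p| ≤ n}

/-- The points `x` such that every `t` at distance less than `1 / (k + 1)` from `x` is within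
`|t - x| / (j + 1)` of `K`. -/
def nearSet {d : ℕ} (K : Set (Ed d)) (j k : ℕ) : Set (Ed d) :=
  {x | ∀ t, dist t x < 1 / ((k : ℝ) + 1) → infDist t K ≤ dist t x / ((j : ℝ) + 1)}

/-- Closedness holds for arbitrary `u`: membership of a fixed `p` in the cone at `x` is an open
condition on `x`. -/
lemma isClosed_coneBddSet {d : ℕ} (u : Ed d × ℝ → ℝ) (n : ℕ) : IsClosed (coneBddSet u n) := by
  have h : coneBddSet u n = ⋂ p : Ed d × ℝ,
      {x | p ∈ coneT (1 / ((n : ℝ) + 1)) (1 / ((n : ℝ) + 1)) x → |u p| ≤ n} := by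
    ext x
    simp [coneBddSet]
  rw [h]
  refine isClosed_iInter fun p => isClosed_imp ?_ isClosed_const
  refine isOpen_const.and (isOpen_const.and ?_)
  exact isOpen_lt (by fun_prop) continuous_const

lemma isClosed_nearSet {d : ℕ} (K : Set (Ed d)) (j k : ℕ) : IsClosed (nearSet K j k) := by
  have h : nearSet K j k = ⋂ t : Ed d,
      {x | dist t x < 1 / ((k : ℝ) + 1) → infDist t K ≤ dist t x / ((j : ℝ) + 1)} := by
    ext x
    simp [nearSet]
  rw [h]
  refine isClosed_iInter fun t => isClosed_imp ?_ ?_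
  · exact isOpen_lt (by fun_prop) continuous_const
  · exact isClosed_le continuous_const (by fun_prop)

lemma coneT_mono {d : ℕ} {a a' h h' : ℝ} (ha : a ≤ a') (hh : h ≤ h') (x : Ed d) :
    coneT a h x ⊆ coneT a' h' x := by
  rintro p ⟨h1, h2, h3⟩
  exact ⟨h1, h2.trans_le hh, h3.trans_le (by gcongr)⟩

lemma monotone_coneBddSet {d : ℕ} (u : Ed d × ℝ → ℝ) : Monotone (coneBddSet u) := by
  intro m n hmn x hx p hp
  have h : 1 / ((n : ℝ) + 1) ≤ 1 / ((m : ℝ) + 1) := by gcongr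
  exact (hx p (coneT_mono h h x hp)).trans (by exact_mod_cast hmn)

lemma monotone_nearSet {d : ℕ} (K : Set (Ed d)) (j : ℕ) : Monotone (nearSet K j) := by
  intro m n hmn x hx t ht
  exact hx t (ht.trans_le (by gcongr))

lemma NTBounded.exists_mem_coneBddSet {d : ℕ} {u : Ed d × ℝ → ℝ} {x : Ed d}
    (h : NTBounded u x) : ∃ n, x ∈ coneBddSet u n := by
  obtain ⟨a, ha, b, hb, M, hM⟩ := h
  obtain ⟨n₁, h₁⟩ := exists_nat_one_div_lt ha
  obtain ⟨n₂, h₂⟩ := exists_nat_one_div_lt hb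
  obtain ⟨n₃, h₃⟩ := exists_nat_ge M
  refine ⟨max n₁ (max n₂ n₃), fun p hp => ?_⟩
  refine (hM p (coneT_mono ?_ ?_ x hp)).trans (h₃.trans (by exact_mod_cast by simp))
  · refine le_trans ?_ h₁.le
    gcongr
    simp
  · refine le_trans ?_ h₂.le
    gcongr
    simp

/-- Almost no point of `K` is a porosity point of `K`. The density theorem is applied along balls
centred at `t → x`, `t ≠ x`, whose radii `|t - x| / (j + 1)` are comparable to `|t - x|`. -/
lemma ae_exists_mem_nearSet {d : ℕ} (K : Set (Ed d)) (j : ℕ) :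
    ∀ᵐ x ∂(volume.restrict K), x ∈ K → ∃ k, x ∈ nearSet K j k := by
  have hj : (0 : ℝ) < (j : ℝ) + 1 := by positivity
  filter_upwards [IsUnifLocDoublingMeasure.ae_tendsto_measure_inter_div
    (volume : Measure (Ed d)) K ((j : ℝ) + 1)] with x hx hxK
  have hδ : Tendsto (fun t : Ed d => dist t x / ((j : ℝ) + 1)) (𝓝[≠] x) (𝓝[>] 0) := by
    refine tendsto_nhdsWithin_iff.2 ⟨?_, ?_⟩
    · have hc : Continuous fun t : Ed d => dist t x / ((j : ℝ) + 1) := by fun_prop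
      simpa using (hc.tendsto x).mono_left nhdsWithin_le_nhds
    · filter_upwards [self_mem_nhdsWithin] with t ht
      exact div_pos (dist_pos.2 ht) hj
  have hlim := hx (fun t => t) _ hδ (Eventually.of_forall fun t => by
    rw [mem_closedBall, mul_div_cancel₀ _ hj.ne', dist_comm])
  have hev := hlim.eventually (lt_mem_nhds one_pos)
  rw [eventually_nhdsWithin_iff, Metric.eventually_nhds_iff] at hev
  obtain ⟨r, hr, hball⟩ := hev
  obtain ⟨k, hk⟩ := exists_nat_one_div_lt hr
  refine ⟨k, fun t ht => ?_⟩
  by_cases htx : t = x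
  · subst htx
    simp [infDist_zero_of_mem hxK]
  · have hpos := hball (ht.trans hk) htx
    -- The density ratio is positive, so the ball around `t` meets `K`.
    have hne : (K ∩ closedBall t (dist t x / ((j : ℝ) + 1))).Nonempty := by
      rw [Set.nonempty_iff_ne_empty]
      intro h0
      simp [h0] at hpos
    obtain ⟨z, hzK, hz⟩ := hne
    exact (infDist_le_dist_of_mem hzK).trans (by rwa [dist_comm, ← mem_closedBall])

/-- Continuity from above for the remainders of an increasing family covering almost all of `K`. -/
lemma exists_measure_sdiff_lt {X : Type*} [MeasurableSpace X] {μ : Measure X} {K : Set X}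
    (hK : MeasurableSet K) (hfin : μ K ≠ ⊤) {S : ℕ → Set X} (hS : ∀ n, MeasurableSet (S n))
    (hmono : Monotone S) (hcov : ∀ᵐ x ∂(μ.restrict K), x ∈ K → ∃ n, x ∈ S n)
    {ε : ENNReal} (hε : 0 < ε) : ∃ n, μ (K \ S n) < ε := by
  have hlim : Tendsto (μ ∘ fun n => K \ S n) atTop (𝓝 (μ (⋂ n, K \ S n))) := by
    refine tendsto_measure_iInter_atTop (fun n => (hK.diff (hS n)).nullMeasurableSet) ?_ ?_
    · intro m n hmn
      exact Set.sdiff_subset_sdiff_right (hmono hmn)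
    · exact ⟨0, ne_top_of_le_ne_top hfin (measure_mono Set.sdiff_subset)⟩
  have hzero : μ (⋂ n, K \ S n) = 0 := by
    rw [ae_restrict_iff' hK] at hcov
    refine measure_mono_null (fun x hx => ?_) hcov
    rw [Set.mem_iInter] at hx
    intro h
    obtain ⟨n, hn⟩ := h (hx 0).1 (hx 0).1
    exact (hx n).2 hn
  rw [hzero] at hlim
  exact (hlim.eventually (gt_mem_nhds hε)).exists

/-- **Lemma 4.4 of Stein's book (Lemma 4.5 in the paper).** If `u` is continuous on
`ℝ^{d+1}₊` and non-tangentially bounded at `(x,0)` for every `x` in a measurable set `E`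
with `0 < |E| < ∞`, then for every `ε > 0` there is a compact `E_ε ⊆ E` with
`|E \ E_ε| < ε` on whose sawtooth regions `u` is uniformly bounded. -/
theorem uniform_bound_on_sawtooth_of_ntbounded
    {d : ℕ} (hd : 1 ≤ d) (u : Ed d × ℝ → ℝ) (hu : ContinuousOn u (upperHS d))
    (E : Set (Ed d)) (hEm : MeasurableSet E)
    (hE0 : 0 < volume E) (hEfin : volume E < ⊤)
    (hbdd : ∀ x ∈ E, NTBounded u x) :
    ∀ ε > (0 : ℝ), ∃ Eε : Set (Ed d),
      IsCompact Eε ∧ Eε ⊆ E ∧ volume (E \ Eε) < ENNReal.ofReal ε ∧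
      ∀ a > (0 : ℝ), ∀ h > (0 : ℝ), ∃ c > (0 : ℝ),
        ∀ x0 ∈ Eε, ∀ p ∈ coneT a h x0, |u p| ≤ c := by
  intro ε hε
  have hε' : (ENNReal.ofReal ε / 2) ≠ 0 := by simp [hε]
  have hε'' : (ENNReal.ofReal ε / 2 / 2) ≠ 0 := by simp [hε]
  obtain ⟨n, hn⟩ := exists_measure_sdiff_lt (μ := volume) hEm hEfin.ne
    (fun n => (isClosed_coneBddSet u n).measurableSet) (monotone_coneBddSet u)
    (Eventually.of_forall fun x hx => (hbdd x hx).exists_mem_coneBddSet) (pos_iff_ne_zero.2 hε'')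
  have hFm : MeasurableSet (E ∩ coneBddSet u n) :=
    hEm.inter (isClosed_coneBddSet u n).measurableSet
  have hFfin : volume (E ∩ coneBddSet u n) ≠ ⊤ :=
    ne_top_of_le_ne_top hEfin.ne (measure_mono Set.inter_subset_left)
  obtain ⟨K, hKF, hKc, hK⟩ := hFm.exists_isCompact_sdiff_lt hFfin hε''
  obtain ⟨η, hη, hηsum⟩ := ENNReal.exists_pos_sum_of_countable' hε' ℕ
  have hkex : ∀ j, ∃ k, volume (K \ nearSet K j k) < η j := fun j =>
    exists_measure_sdiff_lt hKc.measurableSet hKc.measure_lt_top.ne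
      (fun k => (isClosed_nearSet K j k).measurableSet) (monotone_nearSet K j)
      (ae_exists_mem_nearSet K j) (hη j)
  choose k hk using hkex
  refine ⟨K ∩ ⋂ j, nearSet K j (k j), hKc.inter_right (isClosed_iInter fun j =>
    isClosed_nearSet K j (k j)), fun x hx => (hKF hx.1).1, ?_, ?_⟩
  · have hsub : E \ (K ∩ ⋂ j, nearSet K j (k j)) ⊆
        ((E \ coneBddSet u n) ∪ ((E ∩ coneBddSet u n) \ K)) ∪
          ⋃ j, K \ nearSet K j (k j) := by
      rintro x ⟨hxE, hx⟩
      by_cases hxK : x ∈ K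
      · right
        by_contra hcon
        refine hx ⟨hxK, Set.mem_iInter.2 fun j => ?_⟩
        by_contra hj
        exact hcon (Set.mem_iUnion.2 ⟨j, hxK, hj⟩)
      · left
        by_cases hxF : x ∈ coneBddSet u n
        · exact Or.inr ⟨⟨hxE, hxF⟩, hxK⟩
        · exact Or.inl ⟨hxE, hxF⟩
    have hsum : volume (⋃ j, K \ nearSet K j (k j)) < ENNReal.ofReal ε / 2 :=
      ((measure_iUnion_le _).trans (ENNReal.tsum_le_tsum fun j => (hk j).le)).trans_lt hηsum
    calc _ ≤ _ := measure_mono hsub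
      _ ≤ _ := measure_union_le _ _
      _ ≤ _ := add_le_add_left (measure_union_le _ _) _
      _ < (ENNReal.ofReal ε / 2 / 2 + ENNReal.ofReal ε / 2 / 2) + ENNReal.ofReal ε / 2 :=
          ENNReal.add_lt_add (ENNReal.add_lt_add hn hK) hsum
      _ = ENNReal.ofReal ε := by rw [ENNReal.add_halves, ENNReal.add_halves]
  · intro a ha h hh
    have hα : (0 : ℝ) < 1 / ((n : ℝ) + 1) := by positivity
    obtain ⟨j, hj⟩ := exists_nat_one_div_lt (div_pos hα ha)
    have hκ : (0 : ℝ) < 1 / ((k j : ℝ) + 1) := by positivity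
    -- Below the height `δ` the density of `K` applies; above it, compactness does.
    obtain ⟨δ, hδ, hδα, hδκ⟩ : ∃ δ > (0 : ℝ), δ ≤ 1 / ((n : ℝ) + 1) ∧
        δ ≤ 1 / ((k j : ℝ) + 1) / a :=
      ⟨min _ _, lt_min hα (div_pos hκ ha), min_le_left _ _, min_le_right _ _⟩
    have hcpt : IsCompact (cthickening (a * h) K ×ˢ Set.Icc δ h) :=
      hKc.cthickening.prod isCompact_Icc
    obtain ⟨C, hC⟩ := hcpt.exists_bound_of_continuousOn
      (hu.mono fun p hp => hδ.trans_le hp.2.1)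
    refine ⟨max 1 (max C n), by positivity, ?_⟩
    rintro x ⟨hxK, hx⟩ p ⟨hp0, hph, hpx⟩
    rcases lt_or_ge p.2 δ with hlt | hge
    · have hnear : dist p.1 x < 1 / ((k j : ℝ) + 1) := by
        refine hpx.trans_le ?_
        rw [le_div_iff₀ ha] at hδκ
        nlinarith
      have hinf : infDist p.1 K < 1 / ((n : ℝ) + 1) * p.2 := by
        refine (Set.mem_iInter.1 hx j p.1 hnear).trans_lt ?_
        rw [lt_div_iff₀ ha] at hj
        calc dist p.1 x / ((j : ℝ) + 1) < a * p.2 / ((j : ℝ) + 1) := by gcongr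
          _ = 1 / ((j : ℝ) + 1) * a * p.2 := by ring
          _ ≤ _ := by gcongr
      obtain ⟨z, hzK, hz⟩ := (infDist_lt_iff ⟨x, hxK⟩).1 hinf
      refine ((hKF hzK).2 p ⟨hp0, hlt.trans_le hδα, hz⟩).trans ?_
      exact (le_max_right _ _).trans (le_max_right _ _)
    · refine (hC p ⟨?_, hge, hph.le⟩).trans ((le_max_left _ _).trans (le_max_right _ _))
      exact mem_cthickening_of_dist_le _ x _ _ hxK (hpx.le.trans (by gcongr))

end
end
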